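/- For every n ≥ 2 and every 1 ≤ i ≤ n−1, α(n+2; 1, 2, …, i−1, i, i+1, i, i+1, i+2, …, n) = α(n+2; 1, 2, …, i−1, i+1, i+1, i, i, i+2, …, n); that is, the evaluation of α at the sequence of length n+2 obtained from (1,…,n) by repeating the pair (i, i+1) equals its evaluation at the sequence obtained from (1,…,n) by replacing the pair (i, i+1) with (i+1, i+1, i, i). -/

import Mathlib

/-- A triangular array of size `n`, encoded as a function `ℕ → ℕ → ℤ` whose
meaningful entries are `a i j` for `1 ≤ j ≤ i ≤ n` (row `i` has entries
`a i 1, …, a i i`), normalized to be `0` outside this region. -/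
def IsTri (n : ℕ) (a : ℕ → ℕ → ℤ) : Prop :=
  ∀ i j, ¬ (1 ≤ j ∧ j ≤ i ∧ i ≤ n) → a i j = 0

/-- A Monotone Triangle of size `n`: strict increase along rows and weak
increase along North-East and South-East diagonals. -/
def IsMT (n : ℕ) (a : ℕ → ℕ → ℤ) : Prop :=
  IsTri n a ∧
  (∀ i j, 1 ≤ j → j + 1 ≤ i → i ≤ n → a i j < a i (j + 1)) ∧
  (∀ i j, 1 ≤ j → j ≤ i → i + 1 ≤ n →
    a (i + 1) j ≤ a i j ∧ a i j ≤ a (i + 1) (j + 1))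

/-- A Generalized Monotone Triangle (GMT) of size `n`. -/
def IsGMT (n : ℕ) (a : ℕ → ℕ → ℤ) : Prop :=
  IsTri n a ∧
  -- (1) each entry is weakly bounded by its SW- and SE-neighbour
  (∀ i j, 1 ≤ j → j ≤ i → i + 1 ≤ n →
    min (a (i + 1) j) (a (i + 1) (j + 1)) ≤ a i j ∧
    a i j ≤ max (a (i + 1) j) (a (i + 1) (j + 1))) ∧
  -- (2) three weakly increasing consecutive entries force strict increase above
  (∀ i j, 1 ≤ j → j + 1 ≤ i → i + 1 ≤ n →
    a (i + 1) j ≤ a (i + 1) (j + 1) → a (i + 1) (j + 1) ≤ a (i + 1) (j + 2) →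
    a i j < a i (j + 1)) ∧
  -- (3) equality over a strict descent forces an equal neighbour
  (∀ i j, 1 ≤ j → j ≤ i → i + 1 ≤ n →
    (a i j = a (i + 1) j → a (i + 1) (j + 1) < a (i + 1) j →
      2 ≤ j ∧ a i (j - 1) = a i j) ∧
    (a (i + 1) (j + 1) < a (i + 1) j → a (i + 1) (j + 1) = a i j →
      j + 1 ≤ i ∧ a i (j + 1) = a i j))

/-- The bottom row of a triangular array of size `n` is `(k 0, …, k (n-1))`
(1-indexed in the array). -/
def BottomRow (n : ℕ) (a : ℕ → ℕ → ℤ) (k : Fin n → ℤ) : Prop :=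
  ∀ j : Fin n, a n (j.1 + 1) = k j

/-- The set of Monotone Triangles of size `n` with bottom row `k`. -/
def MTset (n : ℕ) (k : Fin n → ℤ) : Set (ℕ → ℕ → ℤ) :=
  {a | IsMT n a ∧ BottomRow n a k}

/-- The set `𝒢ₙ(k)` of Generalized Monotone Triangles of size `n` with bottom row `k`. -/
def GMTset (n : ℕ) (k : Fin n → ℤ) : Set (ℕ → ℕ → ℤ) :=
  {a | IsGMT n a ∧ BottomRow n a k}

/-- The positions `(i, j)` of newcomers of a triangular array:
`a (i+1) j > a i j > a (i+1) (j+1)`. -/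
def newcomersF (n : ℕ) (a : ℕ → ℕ → ℤ) : Finset (ℕ × ℕ) :=
  ((Finset.range (n + 1)) ×ˢ (Finset.range (n + 1))).filter (fun p =>
    1 ≤ p.2 ∧ p.2 ≤ p.1 ∧ p.1 + 1 ≤ n ∧
    a p.1 p.2 < a (p.1 + 1) p.2 ∧ a (p.1 + 1) (p.2 + 1) < a p.1 p.2)

/-- The positions `(i, j)` of sign-changing pairs `(a i j, a i (j+1))` of a
triangular array: two equal consecutive entries whose interlaced neighbour
below is also equal to them. -/
def scPairsF (n : ℕ) (a : ℕ → ℕ → ℤ) : Finset (ℕ × ℕ) :=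
  ((Finset.range (n + 1)) ×ˢ (Finset.range (n + 1))).filter (fun p =>
    1 ≤ p.2 ∧ p.2 + 1 ≤ p.1 ∧ p.1 + 1 ≤ n ∧
    a p.1 p.2 = a p.1 (p.2 + 1) ∧ a (p.1 + 1) (p.2 + 1) = a p.1 p.2)

/-- `sc(A)`: the total number of newcomers and sign-changing pairs of `A`. -/
def scT (n : ℕ) (a : ℕ → ℕ → ℤ) : ℕ :=
  (newcomersF n a).card + (scPairsF n a).card

/-- `IsAlpha N f` asserts that `f` is the polynomial function
`α(N; k₁, …, k_N)`: it is given by a polynomial with rational coefficients of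
degree at most `N - 1` in each variable, and its value at every strictly
increasing integer sequence equals the number of Monotone Triangles with that
bottom row. -/
def IsAlpha (N : ℕ) (f : (Fin N → ℤ) → ℚ) : Prop :=
  (∃ P : MvPolynomial (Fin N) ℚ, (∀ i : Fin N, P.degreeOf i ≤ N - 1) ∧
    ∀ k : Fin N → ℤ, f k = MvPolynomial.eval (fun i => (k i : ℚ)) P) ∧
  (∀ k : Fin N → ℤ, StrictMono k → f k = ((MTset N k).ncard : ℚ))

open Finset Function

/-- Strict increase of the first `n` entries of a sequence. -/
def StrictBelow (n : ℕ) (l : ℕ → ℤ) : Prop := ∀ j, j + 1 < n → l j < l (j + 1)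

open Classical in
/-- The sequences `(l 0, …, l (n-1))`, extended by `0`, that interlace `(k 0, …, k n)`. -/
noncomputable def interlaceBox : ℕ → (ℕ → ℤ) → Finset (ℕ → ℤ)
  | 0, _ => {0}
  | n + 1, k => (interlaceBox n k ×ˢ Icc (k n) (k (n + 1))).image fun p => update p.1 n p.2

open Classical in
theorem mem_interlaceBox {n : ℕ} {k l : ℕ → ℤ} : l ∈ interlaceBox n k ↔
    (∀ j < n, k j ≤ l j ∧ l j ≤ k (j + 1)) ∧ ∀ j, n ≤ j → l j = 0 := by
  induction n generalizing l with
  | zero => simp [interlaceBox, funext_iff]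
  | succ n ih =>
    simp only [interlaceBox, mem_image, mem_product, mem_Icc, Prod.exists, ih]
    constructor
    · rintro ⟨m, x, ⟨⟨h1, h2⟩, hx⟩, rfl⟩
      refine ⟨fun j hj => ?_, fun j hj => ?_⟩
      · rcases eq_or_ne j n with rfl | hne
        · simpa using hx
        · simpa [hne] using h1 j (by omega)
      · have hne : j ≠ n := by omega
        simpa [hne] using h2 j (by omega)
    · rintro ⟨h1, h2⟩
      refine ⟨update l n 0, l n, ⟨⟨fun j hj => ?_, fun j hj => ?_⟩, h1 n (by omega)⟩, by simp⟩
      · simpa [hj.ne] using h1 j (by omega)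
      · rcases eq_or_ne j n with rfl | hne
        · simp
        · simpa [hne] using h2 j (by omega)

open Classical in
theorem sum_interlaceBox_succ (n : ℕ) (k : ℕ → ℤ) (g : (ℕ → ℤ) → ℚ) :
    ∑ l ∈ interlaceBox (n + 1) k, g l =
      ∑ l ∈ interlaceBox n k, ∑ x ∈ Icc (k n) (k (n + 1)), g (update l n x) := by
  rw [interlaceBox, sum_image, sum_product]
  rintro ⟨l, x⟩ hl ⟨m, y⟩ hm h
  simp only [coe_product, Set.mem_prod, mem_coe, mem_interlaceBox] at hl hm
  have key := fun j => congrFun h j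
  refine Prod.ext (funext fun j => ?_) ?_
  · rcases eq_or_ne j n with rfl | hne
    · simp [hl.1.2 j le_rfl, hm.1.2 j le_rfl]
    · simpa [hne] using key j
  · simpa using key n

open Classical in
/-- The number of Monotone Triangles with bottom row `(k 0, …, k (n-1))`, where the bottom row
itself need not be strictly increasing. -/
noncomputable def weakCount : ℕ → (ℕ → ℤ) → ℚ
  | 0, _ => 1
  | n + 1, k => ∑ l ∈ (interlaceBox n k).filter (StrictBelow n), weakCount n l

theorem weakCount_eq_zero_of_forall {n : ℕ} {k : ℕ → ℤ}
    (h : ∀ l, (∀ j < n, k j ≤ l j ∧ l j ≤ k (j + 1)) → ¬ StrictBelow n l) :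
    weakCount (n + 1) k = 0 := by
  classical
  rw [weakCount, filter_false_of_mem, sum_empty]
  exact fun l hl => h l (mem_interlaceBox.1 hl).1

/-- The count vanishes if the bottom row has three equal consecutive entries. -/
theorem weakCount_eq_zero_of_triple {n j : ℕ} {k : ℕ → ℤ} (hj : j + 2 < n)
    (h1 : k j = k (j + 1)) (h2 : k (j + 1) = k (j + 2)) : weakCount n k = 0 := by
  obtain ⟨n, rfl⟩ : ∃ m, n = m + 1 := ⟨n - 1, by omega⟩
  refine weakCount_eq_zero_of_forall fun l hl hs => ?_
  have a := hl j (by omega)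
  have b := hl (j + 1) (by omega)
  have c := hs j (by omega)
  simp only [add_assoc, Nat.reduceAdd] at *
  omega

/-- The count vanishes if the bottom row has consecutive entries `y, y, y + 1, y + 1`. -/
theorem weakCount_eq_zero_of_pairs {n j : ℕ} {k : ℕ → ℤ} (hj : j + 3 < n)
    (h1 : k (j + 1) = k j) (h2 : k (j + 2) = k j + 1) (h3 : k (j + 3) = k j + 1) :
    weakCount n k = 0 := by
  obtain ⟨n, rfl⟩ : ∃ m, n = m + 1 := ⟨n - 1, by omega⟩
  refine weakCount_eq_zero_of_forall fun l hl hs => ?_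
  have a := hl j (by omega)
  have b := hl (j + 1) (by omega)
  have b' := hl (j + 2) (by omega)
  have c := hs j (by omega)
  have c' := hs (j + 1) (by omega)
  simp only [add_assoc, Nat.reduceAdd] at *
  omega

theorem weakCount_pair_split {n p : ℕ} (hp : p + 1 < n) (k k₁ k₂ : ℕ → ℤ)
    (hk : k (p + 1) = k p + 1)
    (h₁ : ∀ j, k₁ j = if j = p + 1 then k p else k j)
    (h₂ : ∀ j, k₂ j = if j = p then k p + 1 else k j) :
    weakCount n k = weakCount n k₁ + weakCount n k₂ := by
  classical
  obtain ⟨n, rfl⟩ : ∃ m, n = m + 1 := ⟨n - 1, by omega⟩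
  simp only [weakCount]
  have hpn : p < n := by omega
  rw [← sum_union]
  · refine sum_congr (ext fun l => ?_) fun _ _ => rfl
    simp only [mem_union, mem_filter, mem_interlaceBox, ← or_and_right]
    refine and_congr_left fun hs => and_congr_left fun _ => ⟨fun h => ?_, ?_⟩
    · have hb := h p hpn
      rcases (show l p = k p ∨ l p = k p + 1 by omega) with hl | hl
      · refine Or.inl fun j hj => ?_
        have := h j hj
        have := hs (j - 1)
        grind
      · refine Or.inr fun j hj => ?_
        have := h j hj
        have := hs j
        grind
    · rintro (h | h) j hj
      · have := h j hj
        have := h p hpn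
        have := hs p
        grind
      · have := h j hj
        have := h p hpn
        have := hs j
        grind
  · rw [Finset.disjoint_left]
    intro l hl hl'
    simp only [mem_filter, mem_interlaceBox] at hl hl'
    have := hl.1.1 p hpn
    have := hl'.1.1 p hpn
    grind

/-- The signed sum over the sets of pairwise disjoint pairs of equal adjacent entries. -/
def pairWeight : ℕ → (ℕ → ℤ) → ℚ
  | 0, _ => 1
  | 1, _ => 1
  | n + 2, l => pairWeight (n + 1) l - if l n = l (n + 1) then pairWeight n l else 0

theorem pairWeight_congr {n : ℕ} {l m : ℕ → ℤ} (h : ∀ j < n, l j = m j) :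
    pairWeight n l = pairWeight n m := by
  induction n using Nat.twoStepInduction with
  | zero => rfl
  | one => rfl
  | more n ih1 ih2 =>
    rw [pairWeight, pairWeight, ih2 fun j hj => h j (by omega), ih1 fun j hj => h j (by omega),
      h n (by omega), h (n + 1) (by omega)]

open Classical in
theorem pairWeight_eq_ite {n : ℕ} {l : ℕ → ℤ}
    (h : ∀ j, j + 2 < n → l j = l (j + 1) → l (j + 1) ≠ l (j + 2)) :
    pairWeight n l = if ∀ j, j + 1 < n → l j ≠ l (j + 1) then 1 else 0 := by
  induction n using Nat.twoStepInduction with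
  | zero => simp [pairWeight]
  | one => simp [pairWeight]
  | more n ih1 ih2 =>
    rw [pairWeight, ih2 fun j hj => h j (by omega), ih1 fun j hj => h j (by omega)]
    by_cases he : l n = l (n + 1)
    · have hA : (∀ j, j + 1 < n + 1 → l j ≠ l (j + 1)) ↔ ∀ j, j + 1 < n → l j ≠ l (j + 1) := by
        refine ⟨fun H j hj => H j (by omega), fun H j hj hjeq => ?_⟩
        rcases (show j + 1 < n ∨ j + 1 = n by omega) with hlt | rfl
        · exact H j hlt hjeq
        · exact h j (by omega) hjeq he
      have hB : ¬ ∀ j, j + 1 < n + 2 → l j ≠ l (j + 1) := fun H => H n (by omega) he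
      rw [if_pos he, if_neg hB, if_congr hA rfl rfl, sub_self]
    · have hA : (∀ j, j + 1 < n + 2 → l j ≠ l (j + 1)) ↔
          ∀ j, j + 1 < n + 1 → l j ≠ l (j + 1) := by
        refine ⟨fun H j hj => H j (by omega), fun H j hj hjeq => ?_⟩
        rcases (show j + 1 < n + 1 ∨ j = n by omega) with hlt | rfl
        · exact H j hlt hjeq
        · exact he hjeq
      rw [if_neg he, sub_zero, if_congr hA rfl rfl]

open Classical in
theorem pairWeight_mul_weakCount {n : ℕ} {l : ℕ → ℤ} (hl : ∀ j, j + 1 < n → l j ≤ l (j + 1)) :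
    pairWeight n l * weakCount n l = if StrictBelow n l then weakCount n l else 0 := by
  by_cases h : ∃ j, j + 2 < n ∧ l j = l (j + 1) ∧ l (j + 1) = l (j + 2)
  · obtain ⟨j, hj, h1, h2⟩ := h
    simp [weakCount_eq_zero_of_triple hj h1 h2]
  · push Not at h
    have hs : StrictBelow n l ↔ ∀ j, j + 1 < n → l j ≠ l (j + 1) :=
      ⟨fun H j hj => (H j hj).ne, fun H j hj => lt_of_le_of_ne (hl j hj) (H j hj)⟩
    rw [pairWeight_eq_ite h, if_congr hs rfl rfl, ite_mul, one_mul, zero_mul]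

theorem exists_sum_pow_eq (e : ℕ) : ∃ q : Polynomial ℚ, ∀ a b : ℤ, a ≤ b →
    ∑ x ∈ Icc a b, (x : ℚ) ^ e = q.eval ((b : ℚ) + 1) - q.eval (a : ℚ) := by
  refine ⟨Polynomial.C ((e : ℚ) + 1)⁻¹ * Polynomial.bernoulli (e + 1), fun a b hab => ?_⟩
  induction b, hab using Int.leInduction with
  | base =>
    have h0 : (e : ℚ) + 1 ≠ 0 := by positivity
    have := Polynomial.bernoulli_eval_one_add (e + 1) (a : ℚ)
    simp [add_comm (a : ℚ) 1, this]
    field_simp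
    ring
  | succ b hab ih =>
    have h0 : (e : ℚ) + 1 ≠ 0 := by positivity
    have := Polynomial.bernoulli_eval_one_add (e + 1) ((b : ℚ) + 1)
    have hI : Icc a (b + 1) = insert (b + 1) (Icc a b) := by
      ext x
      simp only [mem_Icc, mem_insert]
      omega
    rw [hI, sum_insert (by simp), ih]
    simp [add_comm ((b : ℚ) + 1) 1, this]
    field_simp
    ring

theorem pairWeight_update_self (n : ℕ) (l : ℕ → ℤ) (x : ℤ) :
    pairWeight n (update l n x) = pairWeight n l :=
  pairWeight_congr fun _ hj => by simp [hj.ne]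

theorem prod_update_self (f : ℕ → ℤ → ℚ) (n : ℕ) (l : ℕ → ℤ) (x : ℤ) :
    ∏ j ∈ range n, f j (update l n x j) = ∏ j ∈ range n, f j (l j) :=
  prod_congr rfl fun j hj => by simp [(mem_range.1 hj).ne]

theorem sum_interlaceBox_pairWeight_one (f : ℕ → ℤ → ℚ) (k : ℕ → ℤ) :
    ∑ l ∈ interlaceBox 1 k, pairWeight 1 l * ∏ j ∈ range 1, f j (l j) =
      ∑ x ∈ Icc (k 0) (k 1), f 0 x := by
  rw [sum_interlaceBox_succ 0]
  simp [interlaceBox, pairWeight]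

theorem sum_interlaceBox_pairWeight_add_two (f : ℕ → ℤ → ℚ) (n : ℕ) {k : ℕ → ℤ}
    (hk : ∀ j ≤ n + 1, k j ≤ k (j + 1)) :
    ∑ l ∈ interlaceBox (n + 2) k, pairWeight (n + 2) l * ∏ j ∈ range (n + 2), f j (l j) =
      (∑ l ∈ interlaceBox (n + 1) k, pairWeight (n + 1) l * ∏ j ∈ range (n + 1), f j (l j)) *
        (∑ x ∈ Icc (k (n + 1)) (k (n + 2)), f (n + 1) x) -
      (∑ l ∈ interlaceBox n k, pairWeight n l * ∏ j ∈ range n, f j (l j)) *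
        (f n (k (n + 1)) * f (n + 1) (k (n + 1))) := by
  have h1 := hk n (by omega)
  have h2 := hk (n + 1) le_rfl
  rw [sum_interlaceBox_succ (n + 1), sum_mul, sum_mul, sum_interlaceBox_succ n,
    sum_interlaceBox_succ n, ← sum_sub_distrib]
  refine sum_congr rfl fun l _ => ?_
  have hterm : ∀ y x : ℤ, pairWeight (n + 2) (update (update l n y) (n + 1) x) *
      ∏ j ∈ range (n + 2), f j (update (update l n y) (n + 1) x j) =
      (pairWeight (n + 1) (update l n y) * ∏ j ∈ range (n + 1), f j (update l n y j)) *
        f (n + 1) x -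
      if y = x then (pairWeight n l * ∏ j ∈ range n, f j (l j)) * (f n y * f (n + 1) x)
        else 0 := by
    intro y x
    have hw : pairWeight n (update (update l n y) (n + 1) x) = pairWeight n l :=
      pairWeight_congr fun j hj => by
        have h1 : j ≠ n + 1 := by omega
        simp [h1, hj.ne]
    rw [pairWeight, prod_range_succ, prod_update_self, pairWeight_update_self, hw,
      prod_range_succ, prod_update_self]
    simp only [update_self, ne_eq, Nat.left_eq_add, one_ne_zero, not_false_eq_true,
      update_of_ne]
    split_ifs <;> ring
  simp_rw [hterm, sum_sub_distrib, mul_sum]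
  congr 1
  rw [sum_eq_single (k (n + 1)), sum_eq_single (k (n + 1))]
  · simp
  · intro x _ hx
    simp [hx.symm]
  · intro h
    simp [h2] at h
  · intro y hy hne
    refine sum_eq_zero fun x hx => if_neg ?_
    simp only [mem_Icc] at hy hx
    simp only [add_assoc, Nat.reduceAdd] at *
    omega
  · intro h
    simp [h1] at h

open MvPolynomial in
theorem eval_polynomial_aeval (m : ℕ → ℚ) (u : MvPolynomial ℕ ℚ) (q : Polynomial ℚ) :
    eval m (Polynomial.aeval u q) = q.eval (eval m u) := by
  induction q using Polynomial.induction_on' with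
  | add p q hp hq => simp [hp, hq]
  | monomial n a => simp [MvPolynomial.algebraMap_eq]

open MvPolynomial in
theorem eval_mvPolynomial_aeval (m : ℕ → ℚ) (u : ℕ → MvPolynomial ℕ ℚ) (P : MvPolynomial ℕ ℚ) :
    eval m (aeval u P) = eval (fun j => eval m (u j)) P := by
  induction P using MvPolynomial.induction_on with
  | C a => simp
  | add p q hp hq => simp only [map_add, hp, hq]
  | mul_X p i hp => simp only [map_mul, hp, aeval_X, eval_X]

open MvPolynomial in
theorem exists_sum_interlaceBox_pow_eq (d : ℕ → ℕ) (n : ℕ) : ∃ Q : MvPolynomial ℕ ℚ,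
    ∀ k : ℕ → ℤ, (∀ j < n, k j ≤ k (j + 1)) →
      ∑ l ∈ interlaceBox n k, pairWeight n l * ∏ j ∈ range n, (l j : ℚ) ^ d j =
        eval (fun j => (k j : ℚ)) Q := by
  induction n using Nat.twoStepInduction with
  | zero => exact ⟨1, fun k _ => by simp [interlaceBox, pairWeight]⟩
  | one =>
    obtain ⟨q, hq⟩ := exists_sum_pow_eq (d 0)
    refine ⟨Polynomial.aeval (X 1 + 1) q - Polynomial.aeval (X 0) q, fun k hk => ?_⟩
    rw [sum_interlaceBox_pairWeight_one (fun j x => (x : ℚ) ^ d j), hq _ _ (hk 0 (by omega))]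
    simp [eval_polynomial_aeval]
  | more n ih1 ih2 =>
    obtain ⟨Q₁, h₁⟩ := ih1
    obtain ⟨Q₂, h₂⟩ := ih2
    obtain ⟨q, hq⟩ := exists_sum_pow_eq (d (n + 1))
    refine ⟨Q₂ * (Polynomial.aeval (X (n + 2) + 1) q - Polynomial.aeval (X (n + 1)) q) -
      Q₁ * (X (n + 1) ^ d n * X (n + 1) ^ d (n + 1)), fun k hk => ?_⟩
    rw [sum_interlaceBox_pairWeight_add_two (fun j x => (x : ℚ) ^ d j) n
      (fun j hj => hk j (by omega)), hq _ _ (hk (n + 1) (by omega)),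
      h₁ k (fun j hj => hk j (by omega)), h₂ k (fun j hj => hk j (by omega))]
    simp [eval_polynomial_aeval]

open MvPolynomial in
theorem exists_sum_interlaceBox_eval_eq (n : ℕ) (P : MvPolynomial ℕ ℚ) :
    ∃ Q : MvPolynomial ℕ ℚ, ∀ k : ℕ → ℤ, (∀ j < n, k j ≤ k (j + 1)) →
      ∑ l ∈ interlaceBox n k, pairWeight n l * eval (fun j => (l j : ℚ)) P =
        eval (fun j => (k j : ℚ)) Q := by
  induction P using MvPolynomial.induction_on' with
  | monomial d a =>
    obtain ⟨Q, hQ⟩ := exists_sum_interlaceBox_pow_eq d n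
    set M := d.support.sup id + 1 with hM
    refine ⟨C (a * ∏ j ∈ Ico n (max n M), (0 : ℚ) ^ d j) * Q, fun k hk => ?_⟩
    rw [map_mul, eval_C, ← hQ k hk, mul_sum]
    refine sum_congr rfl fun l hl => ?_
    have hsub : d.support ⊆ range (max n M) := fun j hj => by
      have : j ≤ d.support.sup id := Finset.le_sup (f := id) hj
      simp only [mem_range]
      omega
    have hz : ∏ j ∈ Ico n (max n M), (l j : ℚ) ^ d j = ∏ j ∈ Ico n (max n M), (0 : ℚ) ^ d j :=
      prod_congr rfl fun j hj => by
        rw [(mem_interlaceBox.1 hl).2 j (mem_Ico.1 hj).1, Int.cast_zero]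
    rw [eval_monomial, Finsupp.prod_of_support_subset _ hsub _ (by simp),
      ← prod_range_mul_prod_Ico _ (le_max_left n M), hz]
    ring
  | add p q hp hq =>
    obtain ⟨P', hP⟩ := hp
    obtain ⟨Q', hQ⟩ := hq
    refine ⟨P' + Q', fun k hk => ?_⟩
    simp only [map_add, mul_add, sum_add_distrib, hP k hk, hQ k hk]

open MvPolynomial in
/-- On weakly increasing bottom rows the count is given by a polynomial. -/
theorem exists_weakCount_eq_eval (n : ℕ) : ∃ P : MvPolynomial ℕ ℚ, ∀ k : ℕ → ℤ,
    (∀ j, j + 1 < n → k j ≤ k (j + 1)) → weakCount n k = eval (fun j => (k j : ℚ)) P := by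
  classical
  induction n with
  | zero => exact ⟨1, fun k _ => by simp [weakCount]⟩
  | succ n ih =>
    obtain ⟨P, hP⟩ := ih
    obtain ⟨Q, hQ⟩ := exists_sum_interlaceBox_eval_eq n P
    refine ⟨Q, fun k hk => ?_⟩
    rw [← hQ k fun j hj => hk j (by omega), weakCount, sum_filter]
    refine sum_congr rfl fun l hl => ?_
    have hmono : ∀ j, j + 1 < n → l j ≤ l (j + 1) := fun j hj =>
      ((mem_interlaceBox.1 hl).1 j (by omega)).2.trans ((mem_interlaceBox.1 hl).1 (j + 1) hj).1
    rw [← hP l hmono, pairWeight_mul_weakCount hmono]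

open MvPolynomial in
/-- A polynomial vanishing at all strictly increasing integer sequences vanishes at all integer
sequences. -/
theorem eval_eq_zero_of_forall_strictMono (P : MvPolynomial ℕ ℚ)
    (h : ∀ k : ℕ → ℤ, StrictMono k → eval (fun j => (k j : ℚ)) P = 0) (k : ℕ → ℤ) :
    eval (fun j => (k j : ℚ)) P = 0 := by
  set φ : MvPolynomial ℕ ℚ := aeval (fun j => ∑ i ∈ range (j + 1), X i) P with hφ
  have heval : ∀ m : ℕ → ℚ, eval m φ = eval (fun j => ∑ i ∈ range (j + 1), m i) P := fun m => by
    simp only [hφ, eval_mvPolynomial_aeval, map_sum, eval_X]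
  have hzero : φ = 0 := by
    refine funext_set (fun _ => Set.range fun t : ℕ => ((t : ℚ) + 1))
      (fun _ => Set.infinite_range_of_injective fun a b hab => by simpa using hab) ?_
    intro m hm
    choose t ht using fun i => hm i (Set.mem_univ i)
    rw [heval, map_zero]
    convert h (fun j => ∑ i ∈ range (j + 1), ((t i : ℤ) + 1)) ?_ using 3
    · funext j
      push_cast
      exact sum_congr rfl fun i _ => (ht i).symm
    · refine strictMono_nat_of_lt_succ fun j => ?_
      rw [sum_range_succ _ (j + 1)]
      omega
  have := heval (fun j => (k j : ℚ) - if j = 0 then 0 else (k (j - 1) : ℚ))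
  rw [hzero, map_zero] at this
  rw [this]
  congr 2
  funext j
  induction j with
  | zero => simp
  | succ j ih =>
    rw [sum_range_succ, ← ih]
    simp

/-- Monotone Triangles with bottom row read off from an infinite sequence. -/
def rowMTset (n : ℕ) (k : ℕ → ℤ) : Set (ℕ → ℕ → ℤ) :=
  {a | IsMT n a ∧ ∀ j < n, a n (j + 1) = k j}

/-- Append the row `(k 0, …, k n)` to a triangular array of size `n`. -/
def appendRow (n : ℕ) (k : ℕ → ℤ) (a : ℕ → ℕ → ℤ) : ℕ → ℕ → ℤ := fun i j =>
  if i = n + 1 then (if 1 ≤ j ∧ j ≤ n + 1 then k (j - 1) else 0) else a i j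

theorem rowMTset_zero (k : ℕ → ℤ) : rowMTset 0 k = {0} := by
  ext a
  simp only [rowMTset, IsMT, IsTri, Set.mem_ofPred_eq, Set.mem_singleton_iff]
  constructor
  · rintro ⟨⟨h, -⟩, -⟩
    funext i j
    exact h i j (by omega)
  · rintro rfl
    exact ⟨⟨fun _ _ _ => rfl, fun i j _ _ _ => by omega, fun i j _ _ _ => by omega⟩,
      fun j hj => by omega⟩

theorem appendRow_mem_rowMTset {n : ℕ} {k l : ℕ → ℤ} (hk : StrictBelow (n + 1) k)
    (hl : ∀ j < n, k j ≤ l j ∧ l j ≤ k (j + 1)) {a : ℕ → ℕ → ℤ} (ha : a ∈ rowMTset n l) :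
    appendRow n k a ∈ rowMTset (n + 1) k := by
  obtain ⟨⟨h0, h1, h2⟩, h3⟩ := ha
  refine ⟨⟨fun i j hij => ?_, fun i j hj hji hi => ?_, fun i j hj hji hi => ?_⟩, fun j hj => ?_⟩
  · unfold appendRow
    split_ifs with hi hj
    · omega
    · rfl
    · exact h0 i j (by omega)
  · unfold appendRow
    rcases eq_or_ne i (n + 1) with rfl | hne
    · have := hk (j - 1) (by omega)
      grind
    · simpa [hne] using h1 i j hj hji (by omega)
  · unfold appendRow
    rcases eq_or_ne i n with rfl | hne
    · have := hl (j - 1) (by omega)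
      have := h3 (j - 1) (by omega)
      grind
    · have := h2 i j hj hji (by omega)
      grind
  · simp [appendRow, Nat.lt_succ_iff.1 hj]

theorem exists_appendRow_eq {n : ℕ} {k : ℕ → ℤ} {a : ℕ → ℕ → ℤ}
    (ha : a ∈ rowMTset (n + 1) k) : ∃ l ∈ interlaceBox n k, StrictBelow n l ∧
      ∃ b ∈ rowMTset n l, appendRow n k b = a := by
  obtain ⟨⟨h0, h1, h2⟩, h3⟩ := ha
  refine ⟨fun j => if j < n then a n (j + 1) else 0, mem_interlaceBox.2 ⟨fun j hj => ?_, ?_⟩,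
    fun j hj => ?_, fun i j => if i = n + 1 then 0 else a i j,
    ⟨⟨fun i j hij => ?_, fun i j hj hji hi => ?_, fun i j hj hji hi => ?_⟩, fun j hj => ?_⟩, ?_⟩
  · have := h2 n (j + 1) (by omega) (by omega) le_rfl
    have := h3 j (by omega)
    have := h3 (j + 1) (by omega)
    grind
  · intro j hj
    simp [hj]
  · have := h1 n (j + 1) (by omega) (by omega) (by omega)
    grind
  · have := h0 i j
    grind
  · have := h1 i j hj hji (by omega)
    grind
  · have := h2 i j hj hji (by omega)
    grind
  · simp [hj]
  · funext i j
    have := h0 i j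
    have := h3 (j - 1)
    unfold appendRow
    grind

theorem appendRow_injOn (n : ℕ) (k l m : ℕ → ℤ) {a b : ℕ → ℕ → ℤ} (ha : a ∈ rowMTset n l)
    (hb : b ∈ rowMTset n m) (h : appendRow n k a = appendRow n k b) : a = b := by
  funext i j
  rcases eq_or_ne i (n + 1) with rfl | hne
  · rw [ha.1.1 _ _ (by omega), hb.1.1 _ _ (by omega)]
  · simpa [appendRow, hne] using congrFun (congrFun h i) j

theorem finite_rowMTset_and_ncard {n : ℕ} {k : ℕ → ℤ} (hk : StrictBelow n k) :
    (rowMTset n k).Finite ∧ ((rowMTset n k).ncard : ℚ) = weakCount n k := by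
  classical
  induction n generalizing k with
  | zero => simp [rowMTset_zero, weakCount]
  | succ n ih =>
    choose! hfin hcard using fun l (hl : StrictBelow n l) => ih hl
    set S := (interlaceBox n k).filter (StrictBelow n) with hS
    set F : (ℕ → ℤ) → Finset (ℕ → ℕ → ℤ) := fun l =>
      if hl : StrictBelow n l then (hfin l hl).toFinset.image (appendRow n k) else ∅ with hF
    have hmemF : ∀ l, StrictBelow n l → ∀ a, a ∈ F l ↔
        ∃ b ∈ rowMTset n l, appendRow n k b = a := fun l hl a => by simp [hF, hl]
    have hset : rowMTset (n + 1) k = ↑(S.biUnion F) := by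
      ext a
      simp only [coe_biUnion, Set.mem_iUnion, mem_coe, exists_prop]
      constructor
      · intro ha
        obtain ⟨l, hl, hs, hb⟩ := exists_appendRow_eq ha
        exact ⟨l, mem_filter.2 ⟨hl, hs⟩, (hmemF l hs a).2 hb⟩
      · rintro ⟨l, hl, ha⟩
        rw [hS, mem_filter] at hl
        obtain ⟨b, hb, rfl⟩ := (hmemF l hl.2 a).1 ha
        exact appendRow_mem_rowMTset hk (mem_interlaceBox.1 hl.1).1 hb
    have hdisj : (S : Set (ℕ → ℤ)).PairwiseDisjoint F := by
      intro l hl m hm hne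
      rw [hS, mem_coe, mem_filter, mem_interlaceBox] at hl hm
      refine Finset.disjoint_left.2 fun a hal ham => hne ?_
      obtain ⟨b, hb, rfl⟩ := (hmemF l hl.2 a).1 hal
      obtain ⟨c, hc, hcb⟩ := (hmemF m hm.2 _).1 ham
      obtain rfl := appendRow_injOn n k m l hc hb hcb
      funext j
      rcases lt_or_ge j n with hj | hj
      · rw [← hb.2 j hj, ← hc.2 j hj]
      · rw [hl.1.2 j hj, hm.1.2 j hj]
    refine ⟨hset ▸ finite_toSet _, ?_⟩
    rw [hset, Set.ncard_coe_finset, card_biUnion hdisj, weakCount, Nat.cast_sum]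
    refine sum_congr rfl fun l hl => ?_
    have hs := (mem_filter.1 hl).2
    rw [← hcard l hs, hF]
    simp only [hs, dif_pos]
    rw [card_image_of_injOn, ← Set.ncard_eq_toFinset_card _ (hfin l hs)]
    intro a ha b hb hab
    exact appendRow_injOn n k l l (by simpa using ha) (by simpa using hb) hab

theorem MTset_comp_val (n : ℕ) (k : ℕ → ℤ) : MTset n (fun t => k t) = rowMTset n k := by
  ext a
  simp [MTset, rowMTset, BottomRow, Fin.forall_iff]

open MvPolynomial in
/-- `α` is the polynomial extension of the count of triangles with weakly increasing
bottom row. -/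
theorem IsAlpha.exists_eval {N : ℕ} {α : (Fin N → ℤ) → ℚ} (hα : IsAlpha N α) :
    ∃ Q : MvPolynomial ℕ ℚ, (∀ k : ℕ → ℤ, α (fun t => k t) = eval (fun j => (k j : ℚ)) Q) ∧
      ∀ k : ℕ → ℤ, (∀ j, j + 1 < N → k j ≤ k (j + 1)) → α (fun t => k t) = weakCount N k := by
  obtain ⟨⟨P, -, hP⟩, hcount⟩ := hα
  obtain ⟨Q, hQ⟩ := exists_weakCount_eq_eval N
  have hrename : ∀ k : ℕ → ℤ, α (fun t => k t) =
      eval (fun j => (k j : ℚ)) (rename Fin.val P) := fun k => by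
    rw [hP, eval_rename]
    rfl
  have heq : ∀ k : ℕ → ℤ, α (fun t => k t) = eval (fun j => (k j : ℚ)) Q := fun k => by
    have := eval_eq_zero_of_forall_strictMono (rename Fin.val P - Q) (fun k hk => by
      have hs : StrictBelow N k := fun j _ => hk (Nat.lt_succ_self j)
      rw [map_sub, ← hrename, ← hQ k fun j hj => (hs j hj).le,
        hcount _ fun s t hst => hk hst, MTset_comp_val, (finite_rowMTset_and_ncard hs).2,
        sub_self]) k
    rw [hrename, ← sub_eq_zero, ← map_sub, this]
  exact ⟨Q, heq, fun k hk => by rw [heq, hQ k hk]⟩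

open MvPolynomial in
/-- `α(…, y, y + 1, …) = α(…, y, y, …) + α(…, y + 1, y + 1, …)`. -/
theorem IsAlpha.pair_split {N : ℕ} {α : (Fin N → ℤ) → ℚ} (hα : IsAlpha N α) {p : ℕ}
    (hp : p + 1 < N) (k k₁ k₂ : ℕ → ℤ) (hk : k (p + 1) = k p + 1)
    (h₁ : ∀ j, k₁ j = if j = p + 1 then k p else k j)
    (h₂ : ∀ j, k₂ j = if j = p then k p + 1 else k j) :
    α (fun t => k t) = α (fun t => k₁ t) + α (fun t => k₂ t) := by
  obtain ⟨Q, hQ, hw⟩ := hα.exists_eval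
  set g : ℕ → MvPolynomial ℕ ℚ := fun j => if j = p + 1 then X p + 1 else X j with hg
  set g₁ : ℕ → MvPolynomial ℕ ℚ := fun j => if j = p + 1 then X p else X j with hg₁
  set g₂ : ℕ → MvPolynomial ℕ ℚ := fun j =>
    if j = p then X p + 1 else if j = p + 1 then X p + 1 else X j with hg₂
  have hsubst : ∀ (u : ℕ → MvPolynomial ℕ ℚ) (m m' : ℕ → ℤ),
      (∀ j, eval (fun i => (m i : ℚ)) (u j) = m' j) →
      eval (fun i => (m i : ℚ)) (aeval u Q) = α (fun t => m' t) := fun u m m' hm => by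
    simp only [hQ, eval_mvPolynomial_aeval, hm]
  have key : ∀ m m' m₁ m₂ : ℕ → ℤ, (∀ j, m' j = if j = p + 1 then m p + 1 else m j) →
      (∀ j, m₁ j = if j = p + 1 then m p else m j) →
      (∀ j, m₂ j = if j = p then m p + 1 else if j = p + 1 then m p + 1 else m j) →
      eval (fun i => (m i : ℚ)) (aeval g Q - aeval g₁ Q - aeval g₂ Q) =
        α (fun t => m' t) - α (fun t => m₁ t) - α (fun t => m₂ t) := by
    intro m m' m₁ m₂ h h1 h2
    rw [map_sub, map_sub, hsubst g m m' fun j => ?_, hsubst g₁ m m₁ fun j => ?_,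
      hsubst g₂ m m₂ fun j => ?_]
    · rw [h2, hg₂]
      dsimp only
      split_ifs <;> simp
    · rw [h1, hg₁]
      dsimp only
      split_ifs <;> simp
    · rw [h, hg]
      dsimp only
      split_ifs <;> simp
  have hvanish := eval_eq_zero_of_forall_strictMono (aeval g Q - aeval g₁ Q - aeval g₂ Q)
    (fun m hm => by
      have hstep : ∀ j, m j < m (j + 1) := fun j => hm (Nat.lt_succ_self j)
      obtain ⟨m', hm'⟩ : ∃ m' : ℕ → ℤ, ∀ j, m' j = if j = p + 1 then m p + 1 else m j :=
        ⟨_, fun _ => rfl⟩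
      obtain ⟨m₁, hm₁⟩ : ∃ m₁ : ℕ → ℤ, ∀ j, m₁ j = if j = p + 1 then m p else m j :=
        ⟨_, fun _ => rfl⟩
      obtain ⟨m₂, hm₂⟩ : ∃ m₂ : ℕ → ℤ, ∀ j, m₂ j =
          if j = p then m p + 1 else if j = p + 1 then m p + 1 else m j := ⟨_, fun _ => rfl⟩
      rw [key m m' m₁ m₂ hm' hm₁ hm₂, hw, hw, hw, weakCount_pair_split hp m' m₁ m₂]
      · ring
      · grind
      · grind
      · grind
      all_goals
        intro j _
        have := hstep j
        have := hstep p
        have := hstep (p + 1)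
        grind) k
  rw [key k k k₁ k₂ (by grind) h₁ (by grind)] at hvanish
  linarith

/-- For every `n ≥ 2` and every `1 ≤ i ≤ n - 1`,
`α(n+2; 1,…,i-1,i,i+1,i,i+1,i+2,…,n) = α(n+2; 1,…,i-1,i+1,i+1,i,i,i+2,…,n)`. -/
theorem alpha_repeat_pair (n : ℕ) (hn : 2 ≤ n) (i : ℕ) (hi1 : 1 ≤ i) (hi2 : i ≤ n - 1)
    (α : (Fin (n + 2) → ℤ) → ℚ) (hα : IsAlpha (n + 2) α) :
    α (fun t => if t.1 ≤ i then (t.1 : ℤ) + 1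
        else if t.1 = i + 1 then (i : ℤ)
        else if t.1 = i + 2 then (i : ℤ) + 1
        else (t.1 : ℤ) - 1) =
    α (fun t => if t.1 + 2 ≤ i then (t.1 : ℤ) + 1
        else if t.1 = i - 1 ∨ t.1 = i then (i : ℤ) + 1
        else if t.1 = i + 1 ∨ t.1 = i + 2 then (i : ℤ)
        else (t.1 : ℤ) - 1) := by
  set k : ℕ → ℕ → ℕ → ℕ → ℕ → ℤ := fun a b c d t =>
    if t + 1 = i then (i : ℤ) + a else if t = i then (i : ℤ) + b
    else if t = i + 1 then (i : ℤ) + c else if t = i + 2 then (i : ℤ) + d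
    else if t < i then (t : ℤ) + 1 else (t : ℤ) - 1 with hk
  have hL : α (fun t => k 0 1 0 1 t) = α (fun t => k 0 0 0 1 t) + α (fun t => k 1 1 0 1 t) :=
    hα.pair_split (p := i - 1) (by omega) _ _ _ (by grind) (by grind) (by grind)
  have hR₀ : α (fun t => k 0 0 0 1 t) = α (fun t => k 0 0 0 0 t) + α (fun t => k 0 0 1 1 t) :=
    hα.pair_split (p := i + 1) (by omega) _ _ _ (by grind) (by grind) (by grind)
  have hR₁ : α (fun t => k 1 1 0 1 t) = α (fun t => k 1 1 0 0 t) + α (fun t => k 1 1 1 1 t) :=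
    hα.pair_split (p := i + 1) (by omega) _ _ _ (by grind) (by grind) (by grind)
  obtain ⟨-, -, hw⟩ := hα.exists_eval
  have h0000 : α (fun t => k 0 0 0 0 t) = 0 := by
    rw [hw _ (by grind)]
    exact weakCount_eq_zero_of_triple (j := i) (by omega) (by grind) (by grind)
  have h1111 : α (fun t => k 1 1 1 1 t) = 0 := by
    rw [hw _ (by grind)]
    exact weakCount_eq_zero_of_triple (j := i) (by omega) (by grind) (by grind)
  have h0011 : α (fun t => k 0 0 1 1 t) = 0 := by
    rw [hw _ (by grind)]
    exact weakCount_eq_zero_of_pairs (j := i - 1) (by omega) (by grind) (by grind) (by grind)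
  have hmain : α (fun t => k 0 1 0 1 t) = α (fun t => k 1 1 0 0 t) := by
    rw [hL, hR₀, hR₁, h0000, h1111, h0011]
    ring
  convert hmain using 2
  · funext t
    grind
  · funext t
    grind
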